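/- Let n ≥ 1, d ≥ 1, let P be a polynomial of degree at most d on {-1,1}^n with E|P(X)|^2 = 1 (X uniform on {-1,1}^n), and let A ⊆ {-1,1}^n be non-empty with relative size ε = #A / 2^n. Then for every real q ≥ 3, (1/#A) · Σ_{x∈A} |P(x)|^2 ≤ 2 · ε^{-2/q} · q^d. -/

import Mathlib

open Classical

/-- Expectation with respect to the uniform measure on the discrete cube `{-1,1}^n`,
encoded as `Fin n → Bool` (`true ↦ 1`, `false ↦ -1`). -/
noncomputable def cubeE (n : ℕ) (f : (Fin n → Bool) → ℝ) : ℝ :=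
  (∑ x : Fin n → Bool, f x) / 2 ^ n

/-- The real value of a coordinate of the cube: `true ↦ 1`, `false ↦ -1`. -/
def cubeSign (b : Bool) : ℝ := if b then 1 else -1

/-- `P` is (the restriction to the cube of) a multilinear polynomial of degree at most `d`:
`P x = ∑_{#S ≤ d} a_S ∏_{i ∈ S} x_i`. -/
def IsPolyDeg (n d : ℕ) (P : (Fin n → Bool) → ℝ) : Prop :=
  ∃ a : Finset (Fin n) → ℝ,
    (∀ S : Finset (Fin n), d < S.card → a S = 0) ∧
    ∀ x, P x = ∑ S : Finset (Fin n), a S * ∏ i ∈ S, cubeSign (x i)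

/-- Probability (uniform measure) of a set of points of the cube. -/
noncomputable def cubePr (n : ℕ) (A : Set (Fin n → Bool)) : ℝ :=
  (∑ x : Fin n → Bool, if x ∈ A then (1 : ℝ) else 0) / 2 ^ n

/-- `a` is an `e^{-r}`-quantile of `P(X)`:
`ℙ(P(X) ≥ a) ≥ e^{-r}` and `ℙ(P(X) ≤ a) ≥ 1 - e^{-r}`. -/
def IsQuantile (n : ℕ) (P : (Fin n → Bool) → ℝ) (r a : ℝ) : Prop :=
  Real.exp (-r) ≤ cubePr n {x | a ≤ P x} ∧ 1 - Real.exp (-r) ≤ cubePr n {x | P x ≤ a}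

/-- Discrete partial derivative: `∂_i f(x) = (f(T_i^1 x) - f(T_i^{-1} x))/2`. -/
noncomputable def discDeriv (n : ℕ) (f : (Fin n → Bool) → ℝ) (i : Fin n)
    (x : Fin n → Bool) : ℝ :=
  (f (Function.update x i true) - f (Function.update x i false)) / 2

/-- Squared norm of the discrete gradient: `|∇f(x)|² = ∑_i |∂_i f(x)|²`. -/
noncomputable def gradSq (n : ℕ) (f : (Fin n → Bool) → ℝ) (x : Fin n → Bool) : ℝ :=
  ∑ i : Fin n, (discDeriv n f i x) ^ 2

/-!
Write `ε` for the density of `A`. Hölder's inequality on `A` bounds the mean of `P²` over `A` by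
`ε^(-2/q) (𝔼 |P|^q)^(2/q)`, and Bonami's hypercontractive inequality bounds the remaining factor:
if `P = ∑ a_S x_S`, then `(𝔼 |P|^q)^(2/q) ≤ ∑ (q - 1)^#S a_S²`, which is at most `(q - 1)^d 𝔼 P²`
by Parseval.

Hypercontractivity is proved one variable at a time. Writing `P = g + x_i h` with `g` and `h`
independent of `x_i`, averaging over `x_i` and the two-point inequality
`|a + b|^q + |a - b|^q ≤ 2 (a² + (q - 1) b²)^(q/2)` bound `𝔼 |P|^q` by
`𝔼 (g² + (q - 1) h²)^(q/2)`, and Minkowski's inequality in `L^(q/2)` separates `g` from `h`.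

Differentiating the two-point inequality twice in `b` lowers the exponent from `q` to `q - 2` and
leaves the constant `q - 1` unchanged, which is more than the sharp one for `q - 2`. This gives an
induction in steps of two, starting from exponents at most `2`, where concavity suffices.
-/

section TwoPoint

open Set

lemma abs_rpow_eq_sq_rpow_half (x q : ℝ) : |x| ^ q = (x ^ 2) ^ (q / 2) := by
  rw [← sq_abs, ← Real.rpow_natCast_mul (abs_nonneg x), Nat.cast_ofNat,
    mul_div_cancel₀ q two_ne_zero]

/-- The two-point hypercontractive inequality with constant `c` and exponent `q`, normalized so
that the larger of the two coefficients is `1`. The sharp constant is `c = q - 1` for `q ≥ 2`. -/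
def TwoPointBound (q c : ℝ) : Prop :=
  ∀ b ∈ Icc (0 : ℝ) 1, (1 + b) ^ q + (1 - b) ^ q ≤ 2 * (1 + c * b ^ 2) ^ (q / 2)

lemma TwoPointBound.mono {q c c' : ℝ} (h : TwoPointBound q c) (hq : 0 ≤ q) (hc : 0 ≤ c)
    (hcc' : c ≤ c') : TwoPointBound q c' := fun b hb =>
  (h b hb).trans (by gcongr)

lemma twoPointBound_one_of_le_two {q : ℝ} (hq₀ : 0 ≤ q) (hq₂ : q ≤ 2) : TwoPointBound q 1 := by
  rintro b ⟨hb₀, hb₁⟩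
  have hconcave : ConcaveOn ℝ (Ici 0) fun t : ℝ => t ^ (q / 2) :=
    Real.concaveOn_rpow (by linarith) (by linarith)
  have hmid := hconcave.2 (sq_nonneg (1 + b)) (sq_nonneg (1 - b))
    (by norm_num : (0 : ℝ) ≤ 1 / 2) (by norm_num : (0 : ℝ) ≤ 1 / 2) (by norm_num)
  simp only [smul_eq_mul, ← abs_rpow_eq_sq_rpow_half,
    abs_of_nonneg (by linarith : 0 ≤ 1 + b), abs_of_nonneg (by linarith : 0 ≤ 1 - b)] at hmid
  rw [show 1 / 2 * (1 + b) ^ 2 + 1 / 2 * (1 - b) ^ 2 = 1 + 1 * b ^ 2 by ring] at hmid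
  linarith

lemma hasDerivAt_one_add_rpow {p : ℝ} (hp : 1 ≤ p) (b : ℝ) :
    HasDerivAt (fun t : ℝ => (1 + t) ^ p) (p * (1 + b) ^ (p - 1)) b := by
  simpa using ((hasDerivAt_id b).const_add 1).rpow_const (p := p) (Or.inr hp)

lemma hasDerivAt_one_sub_rpow {p : ℝ} (hp : 1 ≤ p) (b : ℝ) :
    HasDerivAt (fun t : ℝ => (1 - t) ^ p) (-(p * (1 - b) ^ (p - 1))) b := by
  simpa using ((hasDerivAt_id b).const_sub 1).rpow_const (p := p) (Or.inr hp)

lemma hasDerivAt_one_add_mul_sq_rpow {c : ℝ} (hc : 0 ≤ c) (p b : ℝ) :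
    HasDerivAt (fun t : ℝ => (1 + c * t ^ 2) ^ p)
      (2 * c * b * p * (1 + c * b ^ 2) ^ (p - 1)) b := by
  have hbase : HasDerivAt (fun t : ℝ => 1 + c * t ^ 2) (2 * c * b) b :=
    (((hasDerivAt_pow 2 b).const_mul c).const_add 1).congr_deriv (by push_cast; ring)
  exact hbase.rpow_const (Or.inl (by positivity))

lemma le_on_Icc_of_hasDerivAt_le {f f' g g' : ℝ → ℝ} {a b : ℝ}
    (hf : ∀ x ∈ Icc a b, HasDerivAt f (f' x) x) (hg : ∀ x ∈ Icc a b, HasDerivAt g (g' x) x)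
    (ha : f a ≤ g a) (hfg : ∀ x ∈ Icc a b, f' x ≤ g' x) {x : ℝ} (hx : x ∈ Icc a b) : f x ≤ g x :=
  image_le_of_deriv_right_le_deriv_boundary
    (fun y hy => (hf y hy).continuousAt.continuousWithinAt)
    (fun y hy => (hf y (Ico_subset_Icc_self hy)).hasDerivWithinAt) ha
    (fun y hy => (hg y hy).continuousAt.continuousWithinAt)
    (fun y hy => (hg y (Ico_subset_Icc_self hy)).hasDerivWithinAt)
    (fun y hy => hfg y (Ico_subset_Icc_self hy)) hx

lemma TwoPointBound.one_add_rpow_sub_one_sub_rpow_le {r : ℝ} (hr : 0 ≤ r)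
    (h : TwoPointBound r (r + 1)) {b : ℝ} (hb : b ∈ Icc (0 : ℝ) 1) :
    (1 + b) ^ (r + 1) - (1 - b) ^ (r + 1) ≤
      2 * (r + 1) * (b * (1 + (r + 1) * b ^ 2) ^ (r / 2)) := by
  refine le_on_Icc_of_hasDerivAt_le
    (fun t _ => (hasDerivAt_one_add_rpow (by linarith) t).sub
      (hasDerivAt_one_sub_rpow (by linarith) t))
    (fun t _ => ((hasDerivAt_id t).mul
      (hasDerivAt_one_add_mul_sq_rpow (by linarith : 0 ≤ r + 1) (r / 2) t)).const_mul _)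
    (by simp) (fun t ht => ?_) hb
  have ht₀ : 0 ≤ t := ht.1
  have hdrop : 0 ≤ t * (2 * (r + 1) * t * (r / 2) * (1 + (r + 1) * t ^ 2) ^ (r / 2 - 1)) := by
    positivity
  rw [add_sub_cancel_right, sub_neg_eq_add, ← mul_add]
  calc (r + 1) * ((1 + t) ^ r + (1 - t) ^ r)
      ≤ (r + 1) * (2 * (1 + (r + 1) * t ^ 2) ^ (r / 2)) := by gcongr; exact h t ht
    _ = 2 * (r + 1) * (1 * (1 + (r + 1) * t ^ 2) ^ (r / 2)) := by ring
    _ ≤ _ := by gcongr; exact le_add_of_nonneg_right hdrop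

lemma TwoPointBound.add_two {r : ℝ} (hr : 0 ≤ r) (h : TwoPointBound r (r + 1)) :
    TwoPointBound (r + 2) (r + 1) := by
  intro b hb
  refine le_on_Icc_of_hasDerivAt_le
    (fun t _ => (hasDerivAt_one_add_rpow (by linarith) t).add
      (hasDerivAt_one_sub_rpow (by linarith) t))
    (fun t _ => (hasDerivAt_one_add_mul_sq_rpow (by linarith : 0 ≤ r + 1) _ t).const_mul 2)
    (by norm_num) (fun t ht => ?_) hb
  have hodd := h.one_add_rpow_sub_one_sub_rpow_le hr ht
  rw [show r + 2 - 1 = r + 1 by ring, show (r + 2) / 2 - 1 = r / 2 by ring]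
  calc (r + 2) * (1 + t) ^ (r + 1) + -((r + 2) * (1 - t) ^ (r + 1))
      = (r + 2) * ((1 + t) ^ (r + 1) - (1 - t) ^ (r + 1)) := by ring
    _ ≤ (r + 2) * (2 * (r + 1) * (t * (1 + (r + 1) * t ^ 2) ^ (r / 2))) := by gcongr
    _ = _ := by ring

lemma twoPointBound_add_one {r : ℝ} (hr : 0 ≤ r) : TwoPointBound r (r + 1) := by
  obtain ⟨k, hk⟩ : ∃ k : ℕ, r ≤ 2 * (k + 1) := by
    obtain ⟨k, hk⟩ := exists_nat_ge r
    exact ⟨k, by linarith⟩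
  induction k generalizing r with
  | zero =>
    exact (twoPointBound_one_of_le_two hr (by simpa using hk)).mono hr zero_le_one (by linarith)
  | succ k ih =>
    rcases le_total r 2 with hr₂ | hr₂
    · exact ih hr (by linarith [k.cast_nonneg (α := ℝ)])
    · push_cast at hk
      have hstep := (ih (by linarith : 0 ≤ r - 2) (by linarith)).add_two (by linarith)
      rw [sub_add_cancel] at hstep
      exact hstep.mono hr (by linarith) (by linarith)

lemma twoPointBound_sub_one {q : ℝ} (hq : 2 ≤ q) : TwoPointBound q (q - 1) := by
  have hstep := (twoPointBound_add_one (by linarith : 0 ≤ q - 2)).add_two (by linarith)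
  rwa [sub_add_cancel, show q - 2 + 1 = q - 1 by ring] at hstep

lemma TwoPointBound.abs_add_rpow_add_abs_sub_rpow_le {q c : ℝ} (h : TwoPointBound q c)
    (hq : 0 < q) (hc : 0 ≤ c) {a b : ℝ} (hb : 0 ≤ b) (hba : b ≤ a) :
    |a + b| ^ q + |a - b| ^ q ≤ 2 * (a ^ 2 + c * b ^ 2) ^ (q / 2) := by
  obtain rfl | ha := (hb.trans hba).eq_or_lt
  · obtain rfl : b = 0 := le_antisymm hba hb
    simp [hq.ne']
  have hratio : b / a ∈ Icc (0 : ℝ) 1 := ⟨by positivity, (div_le_one ha).2 hba⟩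
  have hscale_add : |a + b| ^ q = a ^ q * (1 + b / a) ^ q := by
    rw [← Real.mul_rpow ha.le (by linarith [hratio.1]), abs_of_nonneg (by linarith)]
    congr 1
    field_simp
  have hscale_sub : |a - b| ^ q = a ^ q * (1 - b / a) ^ q := by
    rw [← Real.mul_rpow ha.le (by linarith [hratio.2]), abs_of_nonneg (by linarith)]
    congr 1
    field_simp
  calc |a + b| ^ q + |a - b| ^ q = a ^ q * ((1 + b / a) ^ q + (1 - b / a) ^ q) := by
        rw [hscale_add, hscale_sub, mul_add]
    _ ≤ a ^ q * (2 * (1 + c * (b / a) ^ 2) ^ (q / 2)) := by gcongr; exact h _ hratio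
    _ = 2 * ((a ^ 2) ^ (q / 2) * (1 + c * (b / a) ^ 2) ^ (q / 2)) := by
        rw [← abs_rpow_eq_sq_rpow_half, abs_of_pos ha]; ring
    _ = 2 * (a ^ 2 + c * b ^ 2) ^ (q / 2) := by
        rw [← Real.mul_rpow (by positivity) (by positivity)]
        congr 2
        field_simp

lemma abs_add_rpow_add_abs_sub_rpow_abs (q a b : ℝ) :
    |(|a| + |b|)| ^ q + |(|a| - |b|)| ^ q = |a + b| ^ q + |a - b| ^ q := by
  rcases abs_choice a with ha | ha <;> rcases abs_choice b with hb | hb <;> rw [ha, hb]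
  · rw [sub_neg_eq_add, ← sub_eq_add_neg, add_comm]
  · rw [← neg_add', abs_neg, neg_add_eq_sub, abs_sub_comm, add_comm]
  · rw [← neg_add, abs_neg, sub_neg_eq_add, neg_add_eq_sub, abs_sub_comm]

theorem abs_add_rpow_add_abs_sub_rpow_le {q : ℝ} (hq : 2 ≤ q) (a b : ℝ) :
    |a + b| ^ q + |a - b| ^ q ≤ 2 * (a ^ 2 + (q - 1) * b ^ 2) ^ (q / 2) := by
  have htwo := twoPointBound_sub_one hq
  have hq₀ : 0 < q := by linarith
  have hc : 0 ≤ q - 1 := by linarith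
  rw [← abs_add_rpow_add_abs_sub_rpow_abs, ← sq_abs a, ← sq_abs b]
  rcases le_total |b| |a| with hba | hab
  · exact htwo.abs_add_rpow_add_abs_sub_rpow_le hq₀ hc (abs_nonneg b) hba
  · rw [add_comm |a|, abs_sub_comm |a|]
    refine (htwo.abs_add_rpow_add_abs_sub_rpow_le hq₀ hc (abs_nonneg a) hab).trans ?_
    have hsq : |a| ^ 2 ≤ |b| ^ 2 := by gcongr
    gcongr 2 * ?_ ^ (q / 2)
    nlinarith

end TwoPoint

section Expectation

open Finset
open scoped BigOperators

variable {Ω : Type*}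

theorem rpow_expect_add_le {s : Finset Ω} {p : ℝ} (hp : 1 ≤ p) {f g : Ω → ℝ}
    (hf : ∀ x ∈ s, 0 ≤ f x) (hg : ∀ x ∈ s, 0 ≤ g x) :
    (𝔼 x ∈ s, (f x + g x) ^ p) ^ (1 / p) ≤
      (𝔼 x ∈ s, f x ^ p) ^ (1 / p) + (𝔼 x ∈ s, g x ^ p) ^ (1 / p) := by
  have hf_sum : 0 ≤ ∑ x ∈ s, f x ^ p := sum_nonneg fun x hx => Real.rpow_nonneg (hf x hx) p
  have hg_sum : 0 ≤ ∑ x ∈ s, g x ^ p := sum_nonneg fun x hx => Real.rpow_nonneg (hg x hx) p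
  have hfg_sum : 0 ≤ ∑ x ∈ s, (f x + g x) ^ p :=
    sum_nonneg fun x hx => Real.rpow_nonneg (add_nonneg (hf x hx) (hg x hx)) p
  simp only [expect_eq_sum_div_card]
  rw [Real.div_rpow hf_sum (by positivity), Real.div_rpow hg_sum (by positivity),
    Real.div_rpow hfg_sum (by positivity), ← add_div]
  gcongr
  exact Real.Lp_add_le_of_nonneg s hp hf hg

lemma rpow_expect_sq_add_mul_sq_le (s : Finset Ω) {q c : ℝ} (hq : 2 ≤ q) (hc : 0 ≤ c)
    (g h : Ω → ℝ) :
    (𝔼 x ∈ s, (g x ^ 2 + c * h x ^ 2) ^ (q / 2)) ^ (2 / q) ≤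
      (𝔼 x ∈ s, |g x| ^ q) ^ (2 / q) + c * (𝔼 x ∈ s, |h x| ^ q) ^ (2 / q) := by
  have hmink := rpow_expect_add_le (s := s) (p := q / 2) (by linarith)
    (f := fun x => g x ^ 2) (g := fun x => c * h x ^ 2)
    (fun x _ => by positivity) (fun x _ => by positivity)
  have hscale : (𝔼 x ∈ s, (c * h x ^ 2) ^ (q / 2)) ^ (2 / q) =
      c * (𝔼 x ∈ s, |h x| ^ q) ^ (2 / q) := by
    simp only [Real.mul_rpow hc (sq_nonneg _), ← abs_rpow_eq_sq_rpow_half, ← mul_expect]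
    rw [Real.mul_rpow (by positivity) (expect_nonneg fun x _ => by positivity),
      ← inv_div q, Real.rpow_rpow_inv hc (by linarith)]
  simpa only [one_div_div, hscale, ← abs_rpow_eq_sq_rpow_half] using hmink

theorem rpow_expect_le_expect_rpow {A : Finset Ω} (hA : A.Nonempty) {p : ℝ} (hp : 1 ≤ p)
    {f : Ω → ℝ} (hf : ∀ x ∈ A, 0 ≤ f x) : (𝔼 x ∈ A, f x) ^ p ≤ 𝔼 x ∈ A, f x ^ p := by
  have hcard : (#A : ℝ) ≠ 0 := by exact_mod_cast hA.card_ne_zero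
  have hjensen := Real.rpow_arith_mean_le_arith_mean_rpow A (fun _ => (#A : ℝ)⁻¹) f
    (fun _ _ => by positivity) (by simp [hcard]) hf hp
  simpa only [inv_mul_eq_div, ← sum_div, ← expect_eq_sum_div_card] using hjensen

variable [Fintype Ω]

lemma expect_le_inv_density_mul_expect (A : Finset Ω) {f : Ω → ℝ} (hf : ∀ x, 0 ≤ f x) :
    𝔼 x ∈ A, f x ≤ ((#A : ℝ) / Fintype.card Ω)⁻¹ * 𝔼 x, f x := by
  rw [inv_div, div_mul_eq_mul_div, Fintype.card_mul_expect, expect_eq_sum_div_card]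
  gcongr
  exacts [fun x _ _ => hf x, subset_univ A]

theorem expect_le_density_rpow_mul_rpow_expect {A : Finset Ω} (hA : A.Nonempty) {p : ℝ}
    (hp : 1 ≤ p) {f : Ω → ℝ} (hf : ∀ x, 0 ≤ f x) :
    𝔼 x ∈ A, f x ≤ ((#A : ℝ) / Fintype.card Ω) ^ (-(1 / p)) * (𝔼 x, f x ^ p) ^ (1 / p) := by
  have hp₀ : 0 < p := by linarith
  have hA_nonneg : 0 ≤ 𝔼 x ∈ A, f x := expect_nonneg fun x _ => hf x
  have hpow : (𝔼 x ∈ A, f x) ^ p ≤ ((#A : ℝ) / Fintype.card Ω)⁻¹ * 𝔼 x, f x ^ p :=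
    (rpow_expect_le_expect_rpow hA hp fun x _ => hf x).trans
      (expect_le_inv_density_mul_expect A fun x => Real.rpow_nonneg (hf x) p)
  calc 𝔼 x ∈ A, f x = ((𝔼 x ∈ A, f x) ^ p) ^ (1 / p) := by
        rw [one_div, Real.rpow_rpow_inv hA_nonneg hp₀.ne']
    _ ≤ (((#A : ℝ) / Fintype.card Ω)⁻¹ * 𝔼 x, f x ^ p) ^ (1 / p) := by gcongr
    _ = _ := by
        rw [Real.mul_rpow (by positivity) (expect_nonneg fun x _ => Real.rpow_nonneg (hf x) p),
          Real.inv_rpow (by positivity), Real.rpow_neg (by positivity)]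

end Expectation

section Cube

open Finset
open scoped BigOperators

variable {ι : Type*}

/-- The multilinear polynomial on the cube with coefficients `a` in the variables indexed by `s`,
that is, `∑_{S ⊆ s} a_S ∏_{i ∈ S} x_i`. Coefficients of sets not contained in `s` are ignored, so
that an induction can adjoin variables to `s` while `a` and the cube stay fixed. -/
def walshSum (a : Finset ι → ℝ) (s : Finset ι) (x : ι → Bool) : ℝ :=
  ∑ S ∈ s.powerset, a S * ∏ i ∈ S, cubeSign (x i)

lemma dependsOn_walshSum (a : Finset ι → ℝ) (s : Finset ι) : DependsOn (walshSum a s) s := by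
  intro x y hxy
  refine sum_congr rfl fun S hS => ?_
  congr 1
  exact prod_congr rfl fun i hi => by rw [hxy i (mem_powerset.1 hS hi)]

variable [DecidableEq ι]

lemma walshSum_insert (a : Finset ι → ℝ) {s : Finset ι} {i : ι} (hi : i ∉ s) (x : ι → Bool) :
    walshSum a (insert i s) x =
      walshSum a s x + cubeSign (x i) * walshSum (fun S => a (insert i S)) s x := by
  rw [walshSum, sum_powerset_insert hi, walshSum, walshSum, mul_sum]
  congr 1
  refine sum_congr rfl fun S hS => ?_
  rw [prod_insert fun hiS => hi (mem_powerset.1 hS hiS)]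
  ring

variable [Fintype ι]

lemma expect_comp_add_cubeSign_mul {i : ι} {s : Finset ι} (hi : i ∉ s) {g h : (ι → Bool) → ℝ}
    (hg : DependsOn g s) (hh : DependsOn h s) (Φ : ℝ → ℝ) :
    𝔼 x, Φ (g x + cubeSign (x i) * h x) = 𝔼 x, (Φ (g x + h x) + Φ (g x - h x)) / 2 := by
  have hflip_involutive :
      Function.Involutive fun x : ι → Bool => Function.update x i (!x i) := fun x => by simp
  have hflip_eq : ∀ {f : (ι → Bool) → ℝ}, DependsOn f s →
      ∀ x, f (Function.update x i (!x i)) = f x := fun hf x =>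
    hf fun j hj => Function.update_of_ne (by rintro rfl; exact hi hj) _ _
  have hflip : 𝔼 x, Φ (g x + cubeSign (x i) * h x) = 𝔼 x, Φ (g x + cubeSign (!x i) * h x) :=
    (Fintype.expect_equiv hflip_involutive.toPerm _ _ fun x => by
      simp [hflip_eq hg, hflip_eq hh]).symm
  have haverage : 𝔼 x, Φ (g x + cubeSign (x i) * h x) =
      𝔼 x, (Φ (g x + cubeSign (x i) * h x) + Φ (g x + cubeSign (!x i) * h x)) / 2 := by
    rw [← expect_div, expect_add_distrib, ← hflip, add_self_div_two]
  rw [haverage]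
  refine expect_congr rfl fun x _ => ?_
  cases x i <;> simp [cubeSign, sub_eq_add_neg, add_comm]

theorem expect_walshSum_sq (a : Finset ι → ℝ) (s : Finset ι) :
    𝔼 x, walshSum a s x ^ 2 = ∑ S ∈ s.powerset, a S ^ 2 := by
  induction s using Finset.induction_on generalizing a with
  | empty => simp [walshSum]
  | insert i s hi ih =>
    simp only [walshSum_insert a hi]
    rw [sum_powerset_insert hi, ← ih a, ← ih fun S => a (insert i S), ← expect_add_distrib,
      expect_comp_add_cubeSign_mul hi (dependsOn_walshSum _ s) (dependsOn_walshSum _ s) (· ^ 2)]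
    exact expect_congr rfl fun x _ => by ring

lemma rpow_expect_abs_add_cubeSign_mul_le {q : ℝ} (hq : 2 ≤ q) {i : ι} {s : Finset ι} (hi : i ∉ s)
    {g h : (ι → Bool) → ℝ} (hg : DependsOn g s) (hh : DependsOn h s) :
    (𝔼 x, |g x + cubeSign (x i) * h x| ^ q) ^ (2 / q) ≤
      (𝔼 x, |g x| ^ q) ^ (2 / q) + (q - 1) * (𝔼 x, |h x| ^ q) ^ (2 / q) := by
  refine le_trans ?_ (rpow_expect_sq_add_mul_sq_le univ hq (by linarith : 0 ≤ q - 1) g h)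
  rw [expect_comp_add_cubeSign_mul hi hg hh (|·| ^ q)]
  refine Real.rpow_le_rpow (expect_nonneg fun x _ => by positivity)
    (expect_le_expect fun x _ => ?_) (by positivity)
  linarith [abs_add_rpow_add_abs_sub_rpow_le hq (g x) (h x)]

theorem rpow_expect_abs_walshSum_le {q : ℝ} (hq : 2 ≤ q) (a : Finset ι → ℝ) (s : Finset ι) :
    (𝔼 x, |walshSum a s x| ^ q) ^ (2 / q) ≤ ∑ S ∈ s.powerset, (q - 1) ^ #S * a S ^ 2 := by
  induction s using Finset.induction_on generalizing a with
  | empty =>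
    simp only [walshSum, powerset_empty, sum_singleton, prod_empty, mul_one, card_empty, pow_zero,
      one_mul, Fintype.expect_const, abs_rpow_eq_sq_rpow_half]
    rw [← inv_div q, Real.rpow_rpow_inv (sq_nonneg _) (by linarith)]
  | insert i s hi ih =>
    have hcard : ∀ S ∈ s.powerset, #(insert i S) = #S + 1 := fun S hS =>
      card_insert_of_notMem fun hiS => hi (mem_powerset.1 hS hiS)
    simp only [walshSum_insert a hi]
    calc _ ≤ (𝔼 x, |walshSum a s x| ^ q) ^ (2 / q) +
          (q - 1) * (𝔼 x, |walshSum (fun S => a (insert i S)) s x| ^ q) ^ (2 / q) :=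
          rpow_expect_abs_add_cubeSign_mul_le hq hi (dependsOn_walshSum _ s)
            (dependsOn_walshSum _ s)
      _ ≤ ∑ S ∈ s.powerset, (q - 1) ^ #S * a S ^ 2 +
          (q - 1) * ∑ S ∈ s.powerset, (q - 1) ^ #S * a (insert i S) ^ 2 :=
          add_le_add (ih a) (mul_le_mul_of_nonneg_left (ih _) (by linarith))
      _ = ∑ S ∈ (insert i s).powerset, (q - 1) ^ #S * a S ^ 2 := by
          rw [sum_powerset_insert hi, mul_sum]
          congr 1
          exact sum_congr rfl fun S hS => by rw [hcard S hS, pow_succ]; ring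

theorem rpow_expect_abs_walshSum_le_pow_mul_expect_sq {q : ℝ} (hq : 2 ≤ q) {d : ℕ}
    {a : Finset ι → ℝ} (ha : ∀ S, d < #S → a S = 0) (s : Finset ι) :
    (𝔼 x, |walshSum a s x| ^ q) ^ (2 / q) ≤ (q - 1) ^ d * 𝔼 x, walshSum a s x ^ 2 := by
  rw [expect_walshSum_sq, mul_sum]
  refine (rpow_expect_abs_walshSum_le hq a s).trans (sum_le_sum fun S _ => ?_)
  rcases le_or_gt #S d with hS | hS
  · gcongr
    linarith
  · simp [ha S hS]

end Cube

section Restriction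

open Finset
open scoped BigOperators

lemma cubeE_eq_expect (n : ℕ) (f : (Fin n → Bool) → ℝ) : cubeE n f = 𝔼 x, f x := by
  simp [cubeE, Fintype.expect_eq_sum_div_card]

lemma IsPolyDeg.exists_eq_walshSum {n d : ℕ} {P : (Fin n → Bool) → ℝ} (hP : IsPolyDeg n d P) :
    ∃ a : Finset (Fin n) → ℝ, (∀ S, d < #S → a S = 0) ∧ P = walshSum a univ := by
  obtain ⟨a, ha, hPa⟩ := hP
  exact ⟨a, ha, funext fun x => by rw [hPa, walshSum, powerset_univ]⟩

theorem restricted_second_moment_q_general {n d : ℕ} {P : (Fin n → Bool) → ℝ}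
    (hP : IsPolyDeg n d P) {A : Finset (Fin n → Bool)} (hA : A.Nonempty) {q : ℝ} (hq : 2 ≤ q) :
    (∑ x ∈ A, P x ^ 2) / (#A : ℝ) ≤
      ((#A : ℝ) / 2 ^ n) ^ (-2 / q) * (q - 1) ^ d * cubeE n (fun x => P x ^ 2) := by
  obtain ⟨a, ha, rfl⟩ := hP.exists_eq_walshSum
  have hholder := expect_le_density_rpow_mul_rpow_expect hA (p := q / 2) (by linarith)
    (f := fun x => walshSum a univ x ^ 2) fun x => sq_nonneg _
  have hcard : (Fintype.card (Fin n → Bool) : ℝ) = 2 ^ n := by simp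
  simp only [← abs_rpow_eq_sq_rpow_half, one_div_div, hcard, ← neg_div] at hholder
  rw [← expect_eq_sum_div_card, cubeE_eq_expect, mul_assoc]
  exact hholder.trans (mul_le_mul_of_nonneg_left
    (rpow_expect_abs_walshSum_le_pow_mul_expect_sq hq ha univ) (by positivity))

end Restriction

/-- For `A` of relative size `ε` and `q ≥ 3`, if `E|P(X)|² = 1` then
`(1/#A) ∑_{x ∈ A} |P(x)|² ≤ 2 ε^{-2/q} q^d`. -/
theorem restricted_second_moment_q (n d : ℕ) (hn : 1 ≤ n) (hd : 1 ≤ d)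
    (P : (Fin n → Bool) → ℝ) (hP : IsPolyDeg n d P)
    (hnorm : cubeE n (fun x => (P x) ^ 2) = 1)
    (A : Finset (Fin n → Bool)) (hA : A.Nonempty) :
    ∀ q : ℝ, 3 ≤ q →
      (∑ x ∈ A, (P x) ^ 2) / (A.card : ℝ) ≤
        2 * ((A.card : ℝ) / 2 ^ n) ^ (-2 / q) * q ^ d := by
  intro q hq
  have hq_sub_one : 0 ≤ q - 1 := by linarith
  calc (∑ x ∈ A, P x ^ 2) / (A.card : ℝ)
      ≤ 1 * ((A.card : ℝ) / 2 ^ n) ^ (-2 / q) * (q - 1) ^ d := by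
        simpa [hnorm] using restricted_second_moment_q_general hP hA (by linarith : 2 ≤ q)
    _ ≤ 2 * ((A.card : ℝ) / 2 ^ n) ^ (-2 / q) * q ^ d := by gcongr <;> linarith
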